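/- Let u : A → B be a flat morphism of noetherian rings. If B is an almost Cohen-Macaulay ring, then all the fibers of u are almost Cohen-Macaulay, i.e. for every P ∈ Spec(A) the ring B_P/PB_P is almost Cohen-Macaulay. -/

import Mathlib

noncomputable section

open TensorProduct

universe u v w





/-- The depth of the ideal `I` on the module `M`: the supremum of lengths of
`M`-regular sequences with entries in `I`. -/
noncomputable def idealDepth (A : Type u) [CommRing A] (I : Ideal A)
    (M : Type v) [AddCommGroup M] [Module A M] : ℕ∞ :=
  sSup {n : ℕ∞ | ∃ rs : List A, (rs.length : ℕ∞) = n ∧ (∀ r ∈ rs, r ∈ I) ∧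
    RingTheory.Sequence.IsRegular M rs}

/-- The depth of a module over a local ring. -/
noncomputable def localDepth (A : Type u) [CommRing A] [IsLocalRing A]
    (M : Type v) [AddCommGroup M] [Module A M] : ℕ∞ :=
  idealDepth A (IsLocalRing.maximalIdeal A) M

/-- The (Krull) dimension of a module, i.e. the Krull dimension of its support. -/
noncomputable def supportDim (A : Type u) [CommRing A]
    (M : Type v) [AddCommGroup M] [Module A M] : WithBot ℕ∞ :=
  Order.krullDim (Module.support A M)

/-- `depth (M_P)` : the depth of the localization of `M` at a prime `P`,
over the local ring `A_P`. -/
noncomputable def depthAt (A : Type u) [CommRing A]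
    (M : Type v) [AddCommGroup M] [Module A M] (P : PrimeSpectrum A) : ℕ∞ :=
  localDepth (Localization.AtPrime P.asIdeal) (LocalizedModule P.asIdeal.primeCompl M)

/-- `ht_M(P) = dim (M_P)` : the height of a prime `P` in the support of `M`,
i.e. the dimension of the localized module `M_P` over `A_P`. -/
noncomputable def heightAt (A : Type u) [CommRing A]
    (M : Type v) [AddCommGroup M] [Module A M] (P : PrimeSpectrum A) : WithBot ℕ∞ :=
  supportDim (Localization.AtPrime P.asIdeal) (LocalizedModule P.asIdeal.primeCompl M)

/-- Serre's condition `(S_n)` for a module: for every `P` in the support,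
`depth (M_P) ≥ min (n, ht_M(P))`. -/
def SerreCondS (A : Type u) [CommRing A] (n : ℕ)
    (M : Type v) [AddCommGroup M] [Module A M] : Prop :=
  ∀ P ∈ Module.support A M,
    min (n : WithBot ℕ∞) (heightAt A M P) ≤ (depthAt A M P : WithBot ℕ∞)

/-- The condition `(C_n)` for a module: for every `P` in the support,
`depth (M_P) ≥ min (n, ht_M(P)) - 1`, equivalently
`min (n, ht_M(P)) ≤ depth (M_P) + 1`. -/
def CondC (A : Type u) [CommRing A] (n : ℕ)
    (M : Type v) [AddCommGroup M] [Module A M] : Prop :=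
  ∀ P ∈ Module.support A M,
    min (n : WithBot ℕ∞) (heightAt A M P) ≤ (depthAt A M P : WithBot ℕ∞) + 1

/-- A module `M` is almost Cohen-Macaulay if `depth(P, M) = depth (M_P)` for every
`P` in the support of `M` (Kang's definition). -/
def IsAlmostCMModule (A : Type u) [CommRing A]
    (M : Type v) [AddCommGroup M] [Module A M] : Prop :=
  ∀ P ∈ Module.support A M, idealDepth A P.asIdeal M = depthAt A M P

/-- A module `M` is Cohen-Macaulay if `depth (M_P) = dim (M_P)` for every `P` in its
support. -/
def IsCMModule (A : Type u) [CommRing A]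
    (M : Type v) [AddCommGroup M] [Module A M] : Prop :=
  ∀ P ∈ Module.support A M, (depthAt A M P : WithBot ℕ∞) = heightAt A M P

/-- A ring is almost Cohen-Macaulay if it is an almost Cohen-Macaulay module over
itself. -/
abbrev IsAlmostCMRing (A : Type u) [CommRing A] : Prop := IsAlmostCMModule A A

/-- A ring is Cohen-Macaulay if it is a Cohen-Macaulay module over itself, i.e. all its
localizations at primes have depth equal to dimension. -/
abbrev IsCMRing (A : Type u) [CommRing A] : Prop := IsCMModule A A

/-- A ring satisfies `(C_n)` if it does so as a module over itself. -/
abbrev RingCondC (A : Type u) [CommRing A] (n : ℕ) : Prop := CondC A n A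

/-- A ring satisfies `(S_n)` if it does so as a module over itself. -/
abbrev RingSerreCondS (A : Type u) [CommRing A] (n : ℕ) : Prop := SerreCondS A n A






variable (A : Type u) [CommRing A] (B : Type u) [CommRing B] [Algebra A B]

/-- The image in `B` of the complement of a prime `P` of `A`, as a submonoid of `B`. -/
noncomputable def fiberSubmonoid (P : PrimeSpectrum A) : Submonoid B :=
  Submonoid.map (algebraMap A B) P.asIdeal.primeCompl

/-- `PB_P` : the extension of the prime `P` of `A` to the localization `B_P` of `B`
at (the image of) the complement of `P`. -/
noncomputable def fiberIdeal (P : PrimeSpectrum A) :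
    Ideal (Localization (fiberSubmonoid A B P)) :=
  Ideal.map ((algebraMap B (Localization (fiberSubmonoid A B P))).comp (algebraMap A B))
    P.asIdeal

/-- The fiber ring `B_P / P B_P` of `A → B` at a prime `P` of `A`. -/
noncomputable def fiberRing (P : PrimeSpectrum A) : Type u :=
  Localization (fiberSubmonoid A B P) ⧸ fiberIdeal A B P

noncomputable instance (P : PrimeSpectrum A) : CommRing (fiberRing A B P) :=
  inferInstanceAs (CommRing (Localization (fiberSubmonoid A B P) ⧸ fiberIdeal A B P))

/-- The fiber module `N_P / P N_P` of a `B`-module `N` at a prime `P` of `A`. -/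
noncomputable def fiberModule (P : PrimeSpectrum A)
    (N : Type u) [AddCommGroup N] [Module B N] : Type u :=
  LocalizedModule (fiberSubmonoid A B P) N ⧸
    (fiberIdeal A B P •
      (⊤ : Submodule (Localization (fiberSubmonoid A B P))
        (LocalizedModule (fiberSubmonoid A B P) N)))

noncomputable instance (P : PrimeSpectrum A) (N : Type u) [AddCommGroup N] [Module B N] :
    AddCommGroup (fiberModule A B P N) :=
  inferInstanceAs (AddCommGroup (LocalizedModule (fiberSubmonoid A B P) N ⧸
    (fiberIdeal A B P •
      (⊤ : Submodule (Localization (fiberSubmonoid A B P))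
        (LocalizedModule (fiberSubmonoid A B P) N)))))

/-- `N_P / P N_P` is a module over the fiber ring `B_P / P B_P`. -/
noncomputable instance (P : PrimeSpectrum A) (N : Type u) [AddCommGroup N] [Module B N] :
    Module (fiberRing A B P) (fiberModule A B P N) :=
  inferInstanceAs (Module (Localization (fiberSubmonoid A B P) ⧸ fiberIdeal A B P)
    (LocalizedModule (fiberSubmonoid A B P) N ⧸
      (fiberIdeal A B P •
        (⊤ : Submodule (Localization (fiberSubmonoid A B P))
          (LocalizedModule (fiberSubmonoid A B P) N)))))

section ExtVanishing

open CategoryTheory Abelian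

/-- `Ext^i(L, V) = 0` for modules over a commutative ring `C`. -/
abbrev ExtVanishes (C : Type u) [CommRing C] (L : Type u) [AddCommGroup L] [Module C L] (i : ℕ)
    (V : Type u) [AddCommGroup V] [Module C V] : Prop :=
  Subsingleton (Ext (ModuleCat.of C L) (ModuleCat.of C V) i)

variable {C : Type u} [CommRing C] (L : Type u) [AddCommGroup L] [Module C L]
variable {U V W : Type u} [AddCommGroup U] [Module C U] [AddCommGroup V] [Module C V]
  [AddCommGroup W] [Module C W] {f : U →ₗ[C] V} {g : V →ₗ[C] W}

theorem moduleCat_shortExact (hf : Function.Injective f) (hg : Function.Surjective g)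
    (hfg : Function.Exact f g) :
    (ShortComplex.mk (ModuleCat.ofHom f) (ModuleCat.ofHom g)
      (by ext x; exact hfg.apply_apply_eq_zero x)).ShortExact where
  exact := ModuleCat.shortComplex_exact _ hfg
  mono_f := (ModuleCat.mono_iff_injective _).mpr hf
  epi_g := (ModuleCat.epi_iff_surjective _).mpr hg

theorem ExtVanishes.middle (hf : Function.Injective f) (hg : Function.Surjective g)
    (hfg : Function.Exact f g) {i : ℕ} (hU : ExtVanishes C L i U) (hW : ExtVanishes C L i W) :
    ExtVanishes C L i V := by
  refine subsingleton_of_forall_eq 0 fun x ↦ ?_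
  obtain ⟨y, rfl⟩ := Ext.covariant_sequence_exact₂ _ (moduleCat_shortExact hf hg hfg) x
    (hW.elim _ _)
  rw [hU.elim y 0, Ext.zero_comp]

theorem ExtVanishes.left (hf : Function.Injective f) (hg : Function.Surjective g)
    (hfg : Function.Exact f g) {i : ℕ} (hW : ExtVanishes C L i W)
    (hV : ExtVanishes C L (i + 1) V) : ExtVanishes C L (i + 1) U := by
  refine subsingleton_of_forall_eq 0 fun x ↦ ?_
  obtain ⟨y, rfl⟩ := Ext.covariant_sequence_exact₁ _ (moduleCat_shortExact hf hg hfg) x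
    (hV.elim _ _) rfl
  rw [hW.elim y 0, Ext.zero_comp]

theorem ExtVanishes.right (hf : Function.Injective f) (hg : Function.Surjective g)
    (hfg : Function.Exact f g) {i : ℕ} (hV : ExtVanishes C L i V)
    (hU : ExtVanishes C L (i + 1) U) : ExtVanishes C L i W := by
  refine subsingleton_of_forall_eq 0 fun x ↦ ?_
  obtain ⟨y, rfl⟩ := Ext.covariant_sequence_exact₃ _ (moduleCat_shortExact hf hg hfg) x rfl
    (hU.elim _ _)
  rw [hV.elim y 0, Ext.zero_comp]

variable {L} in
theorem extVanishes_zero_iff : ExtVanishes C L 0 V ↔ Subsingleton (L →ₗ[C] V) :=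
  (Ext.addEquiv₀.trans ModuleCat.homAddEquiv).toEquiv.subsingleton_congr

theorem ExtVanishes.of_injective_zero (hf : Function.Injective f) (hV : ExtVanishes C L 0 V) :
    ExtVanishes C L 0 U := by
  rw [extVanishes_zero_iff] at hV ⊢
  exact subsingleton_of_forall_eq 0 fun h ↦ LinearMap.ext fun x ↦
    hf (by simpa using LinearMap.congr_fun (hV.elim (f ∘ₗ h) 0) x)

theorem ExtVanishes.of_subsingleton [Subsingleton V] (i : ℕ) : ExtVanishes C L i V := by
  refine subsingleton_of_forall_eq 0 fun x ↦ ?_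
  have h : 𝟙 (ModuleCat.of C V) = 0 := by ext x; exact Subsingleton.elim (α := V) _ _
  rw [← x.comp_mk₀_id, h, Ext.mk₀_zero, Ext.comp_zero]

theorem ExtVanishes.of_equiv (e : U ≃ₗ[C] V) {i : ℕ} (hU : ExtVanishes C L i U) :
    ExtVanishes C L i V :=
  .middle L (W := PUnit) (f := e.toLinearMap) (g := 0) e.injective
    (fun _ ↦ ⟨0, Subsingleton.elim _ _⟩)
    (fun y ↦ by simp) hU (.of_subsingleton L i)

/-- If `r` annihilates `L` and is `V`-regular, then vanishing of `Ext^i(L, V/rV)` implies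
vanishing of `Ext^{i+1}(L, V)`. -/
theorem ExtVanishes.of_smul {r : C} (hr : r ∈ Module.annihilator C L)
    {g : V →ₗ[C] W} (hV : IsSMulRegular V r) (hg : Function.Surjective g)
    (hfg : Function.Exact (LinearMap.lsmul C V r) g) {i : ℕ} (hW : ExtVanishes C L i W) :
    ExtVanishes C L (i + 1) V := by
  refine subsingleton_of_forall_eq 0 fun x ↦ ?_
  have hx : x.comp (Ext.mk₀ (ModuleCat.ofHom (LinearMap.lsmul C V r))) (add_zero _) = 0 :=
    congr($(Ext.postcomp_smul_id_eq_zero_of_mem_annihilator (M := ModuleCat.of C V)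
      (N := ModuleCat.of C L) hr (i + 1)) x)
  obtain ⟨y, rfl⟩ := Ext.covariant_sequence_exact₁ _
    (moduleCat_shortExact (f := LinearMap.lsmul C V r) hV hg hfg) x hx rfl
  rw [hW.elim y 0, Ext.zero_comp]

end ExtVanishing

section RegularSequences

open RingTheory.Sequence IsLocalRing

variable {R : Type u} [CommRing R] {M : Type u} [AddCommGroup M] [Module R M] {I : Ideal R}

theorem RingTheory.Sequence.IsRegular.take {rs : List R} (h : IsRegular M rs) (n : ℕ) :
    IsRegular M (rs.take n) := by
  have hrs := h.1
  rw [← List.take_append_drop n rs, isWeaklyRegular_append_iff] at hrs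
  refine ⟨hrs.1, fun htop ↦ h.2 (top_le_iff.mp ?_).symm⟩
  refine htop.le.trans (Submodule.smul_mono_left (Ideal.span_mono fun x hx ↦ ?_))
  exact List.mem_of_mem_take hx

theorem natCast_le_idealDepth_iff [Nontrivial M] {n : ℕ} :
    (n : ℕ∞) ≤ idealDepth R I M ↔
      ∃ rs : List R, rs.length = n ∧ (∀ r ∈ rs, r ∈ I) ∧ IsRegular M rs := by
  refine ⟨fun h ↦ ?_, fun ⟨rs, hn, hI, hrs⟩ ↦ le_sSup ⟨rs, congrArg _ hn, hI, hrs⟩⟩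
  obtain - | n := n
  · exact ⟨[], rfl, by simp, .nil R M⟩
  have hlt : (n : ℕ∞) < idealDepth R I M := lt_of_lt_of_le (by exact_mod_cast n.lt_succ_self) h
  obtain ⟨_, ⟨rs, rfl, hI, hrs⟩, hn⟩ := lt_sSup_iff.mp hlt
  refine ⟨rs.take (n + 1), ?_, fun r hr ↦ hI r (List.mem_of_mem_take hr), hrs.take _⟩
  have : n < rs.length := by exact_mod_cast hn
  simp; omega

theorem idealDepth_mono {J : Ideal R} (h : I ≤ J) : idealDepth R I M ≤ idealDepth R J M :=
  sSup_le_sSup fun _ ⟨rs, hn, hI, hrs⟩ ↦ ⟨rs, hn, fun r hr ↦ h (hI r hr), hrs⟩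

theorem idealDepth_congr {M' : Type u} [AddCommGroup M'] [Module R M'] (e : M ≃ₗ[R] M') :
    idealDepth R I M = idealDepth R I M' := by
  simp only [idealDepth, e.isRegular_congr]

theorem maximalIdeal_smul_top_lt_top [IsLocalRing R] [Module.Finite R M] [Nontrivial M] :
    maximalIdeal R • (⊤ : Submodule R M) < ⊤ :=
  (Submodule.top_ne_ideal_smul_of_le_jacobson_annihilator (maximalIdeal_le_jacobson _)).symm.lt_top

variable [IsNoetherianRing R]

theorem not_isSMulRegular_of_mem_associatedPrimes {p : Ideal R} (hp : p ∈ associatedPrimes R M)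
    {x : R} (hx : x ∈ p) : ¬ IsSMulRegular M x := by
  have h : x ∈ ⋃ p ∈ associatedPrimes R M, (p : Set R) := Set.mem_biUnion hp hx
  rw [biUnion_associatedPrimes_eq_zero_divisors] at h
  obtain ⟨y, hy, hxy⟩ := h
  rw [isSMulRegular_iff_right_eq_zero_of_smul]
  exact fun h ↦ hy (h y hxy)

variable [Module.Finite R M]

theorem natCast_le_idealDepth_iff_extVanishes [Nontrivial M] (hI : I • (⊤ : Submodule R M) < ⊤)
    {n : ℕ} : (n : ℕ∞) ≤ idealDepth R I M ↔ ∀ i < n, ExtVanishes R (R ⧸ I) i M := by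
  rw [natCast_le_idealDepth_iff]
  have hsupp : Module.support R (R ⧸ I) = PrimeSpectrum.zeroLocus I := by
    rw [Module.support_eq_zeroLocus, Ideal.annihilator_quotient]
  refine ⟨fun ⟨rs, hn, hmem, hrs⟩ i hi ↦ ?_, fun h ↦ ?_⟩
  · exact ModuleCat.subsingleton_ext_of_exists_isRegular I (.of R (R ⧸ I)) hsupp.le (.of R M) hI rs
      hmem hrs i (hn ▸ hi)
  · exact ModuleCat.exists_isRegular_of_exists_subsingleton_ext I n (.of R M) hI
      (.of R (R ⧸ I)) hsupp h

/-- If an ideal `I` contains no element regular on `M`, it is contained in an associated prime. -/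
theorem exists_associatedPrime_ge_of_forall_not_isSMulRegular
    (h : ∀ x ∈ I, ¬ IsSMulRegular M x) : ∃ p ∈ associatedPrimes R M, I ≤ p := by
  refine (I.subset_union_prime_finite (associatedPrimes.finite R M) (f := id) 0 0
    fun _ h _ _ ↦ h.1).1 fun x hx ↦ ?_
  simp only [id]
  rw [biUnion_associatedPrimes_eq_zero_divisors]
  have := h x hx
  rw [isSMulRegular_iff_right_eq_zero_of_smul] at this
  push Not at this
  obtain ⟨y, hy, hy'⟩ := this
  exact ⟨y, hy', hy⟩

/-- If `I M ≠ M` and no element of `I` is regular on `M/(rs)M`, where `rs` is an `M`-regular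
sequence in `I`, then the `I`-depth of `M` is at most the length of `rs`. -/
theorem idealDepth_le_length {rs : List R} (hI : I • (⊤ : Submodule R M) < ⊤)
    (hrs : IsWeaklyRegular M rs) (hmem : ∀ r ∈ rs, r ∈ I)
    (h : ∀ x ∈ I, ¬ IsSMulRegular (M ⧸ Ideal.ofList rs • (⊤ : Submodule R M)) x) :
    idealDepth R I M ≤ rs.length := by
  induction rs generalizing M with
  | nil =>
    have : Nontrivial M := (Submodule.nontrivial_iff R).mp (nontrivial_of_lt _ _ hI)
    by_contra! hlt
    obtain ⟨rs, hn, hm, hreg⟩ := (natCast_le_idealDepth_iff (n := 1)).mp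
      (by simpa [Order.one_le_iff_pos] using hlt)
    obtain ⟨r, rfl⟩ := List.length_eq_one_iff.mp hn
    have e := Submodule.quotEquivOfEqBot (Ideal.ofList ([] : List R) • (⊤ : Submodule R M))
      (by rw [Ideal.ofList_nil, Submodule.bot_smul])
    exact h r (hm r (by simp)) ((e.isSMulRegular_congr r).mpr
      ((isWeaklyRegular_singleton_iff M r).mp hreg.1))
  | cons r rs ih =>
    rw [isWeaklyRegular_cons_iff] at hrs
    have : Nontrivial M := (Submodule.nontrivial_iff R).mp (nontrivial_of_lt _ _ hI)
    have hr : r ∈ I := hmem r (by simp)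
    have hI' : I • (⊤ : Submodule R (QuotSMulTop r M)) < ⊤ := by
      refine lt_top_iff_ne_top.mpr fun heq ↦ hI.ne ?_
      have := congrArg (Submodule.comap (Submodule.mkQ _)) heq
      simpa [Submodule.comap_smul_top_of_surjective I _ (Submodule.mkQ_surjective _),
        Submodule.smul_mono_left ((Ideal.span_singleton_le_iff_mem I).mpr hr),
        ← Submodule.ideal_span_singleton_smul] using this
    have : Nontrivial (QuotSMulTop r M) :=
      (Submodule.nontrivial_iff R).mp (nontrivial_of_lt _ _ hI')
    have key := ih hI' hrs.2 (fun x hx ↦ hmem x (by simp [hx])) fun x hx hreg ↦ h x hx <|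
      ((Submodule.quotOfListConsSMulTopEquivQuotSMulTopInner M r rs).isSMulRegular_congr x).mpr hreg
    by_contra! hlt
    have hle : ((rs.length + 2 : ℕ) : ℕ∞) ≤ idealDepth R I M := by
      have := Order.add_one_le_of_lt hlt
      simpa [add_assoc, one_add_one_eq_two] using this
    rw [natCast_le_idealDepth_iff_extVanishes hI] at hle
    have hlt' : ((rs.length + 1 : ℕ) : ℕ∞) ≤ idealDepth R I (QuotSMulTop r M) := by
      rw [natCast_le_idealDepth_iff_extVanishes hI']
      intro i hi
      exact .right _ (f := LinearMap.lsmul R M r) (g := Submodule.mkQ _) hrs.1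
        (Submodule.mkQ_surjective _) (LinearMap.exact_lsmul_mkQ_smul_top M r)
        (hle i (by omega)) (hle (i + 1) (by omega))
    have := hlt'.trans key
    norm_cast at this
    omega

end RegularSequences

section FlatLocal

open IsLocalRing

variable {R C : Type u} [CommRing R] [CommRing C] [Algebra R C]

theorem baseChange_surjective {N N' : Type u} [AddCommGroup N] [Module R N] [AddCommGroup N']
    [Module R N'] {f : N →ₗ[R] N'} (hf : Function.Surjective f) :
    Function.Surjective (f.baseChange C) :=
  LinearMap.lTensor_surjective C hf

theorem baseChange_lsmul {N : Type u} [AddCommGroup N] [Module R N] (r : R) :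
    (LinearMap.lsmul R N r).baseChange C = LinearMap.lsmul C (C ⊗[R] N) (algebraMap R C r) := by
  ext; simp

variable [Module.Flat R C]

theorem baseChange_injective {N N' : Type u} [AddCommGroup N] [Module R N] [AddCommGroup N']
    [Module R N'] {f : N →ₗ[R] N'} (hf : Function.Injective f) :
    Function.Injective (f.baseChange C) :=
  Module.Flat.lTensor_preserves_injective_linearMap f hf

theorem baseChange_exact {N N' N'' : Type u} [AddCommGroup N] [Module R N] [AddCommGroup N']
    [Module R N'] [AddCommGroup N''] [Module R N''] {f : N →ₗ[R] N'} {g : N' →ₗ[R] N''}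
    (h : Function.Exact f g) : Function.Exact (f.baseChange C) (g.baseChange C) :=
  Module.Flat.lTensor_exact C h

/-- Devissage along `0 → N → N → N/rN → 0`, base changed to a flat algebra. -/
theorem ExtVanishes.baseChange_of_quotSMulTop (L : Type u) [AddCommGroup L] [Module C L]
    {N : Type u} [AddCommGroup N] [Module R N] {r : R} (hr : IsSMulRegular N r)
    (hL : algebraMap R C r ∈ Module.annihilator C L) {i : ℕ}
    (h : ExtVanishes C L i (C ⊗[R] QuotSMulTop r N)) : ExtVanishes C L (i + 1) (C ⊗[R] N) := by
  refine .of_smul L hL (g := (Submodule.mkQ _).baseChange C) ?_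
    (baseChange_surjective (Submodule.mkQ_surjective _)) ?_ h
  · have := baseChange_injective (C := C) (f := LinearMap.lsmul R N r) hr
    rwa [baseChange_lsmul] at this
  · have := baseChange_exact (C := C) (LinearMap.exact_lsmul_mkQ_smul_top N r)
    rwa [baseChange_lsmul] at this

theorem ExtVanishes.baseChange_zero_of_isSMulRegular (L : Type u) [AddCommGroup L] [Module C L]
    {N : Type u} [AddCommGroup N] [Module R N] {r : R} (hr : IsSMulRegular N r)
    (hL : algebraMap R C r ∈ Module.annihilator C L) : ExtVanishes C L 0 (C ⊗[R] N) := by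
  rw [extVanishes_zero_iff]
  refine IsSMulRegular.linearMap_subsingleton_of_mem_annihilator ?_ hL
  have := baseChange_injective (C := C) (f := LinearMap.lsmul R N r) hr
  rwa [baseChange_lsmul] at this

variable [IsNoetherianRing R] [IsLocalRing R]

/-- If `Ext^i(L, C ⊗ k) = 0` for all `i < s`, where `k` is the residue field of `R` and the
maximal ideal of `R` kills `L`, then `Ext^i(L, C ⊗ N) = 0` for all `i < s` and all finitely
generated `R`-modules `N`. -/
theorem ExtVanishes.baseChange_of_residueField (L : Type u) [AddCommGroup L] [Module C L]
    (hL : ∀ r ∈ maximalIdeal R, algebraMap R C r ∈ Module.annihilator C L) {s : ℕ}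
    (hs : ∀ i < s, ExtVanishes C L i (C ⊗[R] (R ⧸ maximalIdeal R)))
    (N : Type u) [AddCommGroup N] [Module R N] [Module.Finite R N] :
    ∀ i < s, ExtVanishes C L i (C ⊗[R] N) := by
  suffices H : ∀ (J : Ideal R) (N : Type u) [AddCommGroup N] [Module R N] [Module.Finite R N],
      J ≤ Module.annihilator R N → ∀ i < s, ExtVanishes C L i (C ⊗[R] N) from H ⊥ N bot_le
  intro J
  induction J using WellFoundedGT.induction with | ind J ih => ?_
  intro N _ _ hN
  induction hN using IsNoetherianRing.induction_on_isQuotientEquivQuotientPrime R with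
  | subsingleton N => exact fun _ i _ ↦ .of_subsingleton L i
  | exact N₁ N₂ N₃ f g hf hg hfg h₁ h₃ =>
    intro hJ i hi
    exact .middle L (baseChange_injective hf) (baseChange_surjective hg) (baseChange_exact hfg)
      (h₁ (hJ.trans (f.annihilator_le_of_injective hf)) i hi)
      (h₃ (hJ.trans (g.annihilator_le_of_surjective hg)) i hi)
  | quotient N p e =>
    intro hJ i hi
    refine .of_equiv L (e.symm.baseChange R C _ _) ?_
    rw [e.annihilator_eq, Ideal.annihilator_quotient] at hJ
    obtain hJ | hJ := hJ.lt_or_eq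
    · exact ih p.1 hJ (R ⧸ p.1) Ideal.annihilator_quotient.ge i hi
    by_cases hp : p.1 = maximalIdeal R
    · rw [hp]
      exact hs i hi
    obtain ⟨x, hx, hxp⟩ := SetLike.exists_of_lt ((le_maximalIdeal p.2.ne_top).lt_of_ne hp)
    have hreg : IsSMulRegular (R ⧸ p.1) x := by
      rw [isSMulRegular_iff_right_eq_zero_of_smul]
      intro y hy
      obtain ⟨y, rfl⟩ := Ideal.Quotient.mk_surjective y
      rw [Ideal.Quotient.eq_zero_iff_mem]
      refine (p.2.mem_or_mem (Ideal.Quotient.eq_zero_iff_mem.mp ?_)).resolve_left hxp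
      simpa [Algebra.smul_def] using hy
    obtain - | i := i
    · exact .baseChange_zero_of_isSMulRegular L hreg (hL x hx)
    refine .baseChange_of_quotSMulTop L hreg (hL x hx)
      (ih (p.1 ⊔ Ideal.span {x}) ?_ _ (sup_le ?_ ?_) i (by omega))
    · rw [hJ]
      exact left_lt_sup.mpr fun h ↦ hxp (h (Ideal.mem_span_singleton_self x))
    · exact Ideal.annihilator_quotient.ge.trans
        (LinearMap.annihilator_le_of_surjective _ (Submodule.mkQ_surjective _))
    · rw [Ideal.span_singleton_le_iff_mem, Module.mem_annihilator]
      intro y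
      obtain ⟨y, rfl⟩ := Submodule.mkQ_surjective _ y
      rw [← map_smul]
      exact (Submodule.Quotient.mk_eq_zero _).mpr
        (Submodule.smul_mem_pointwise_smul y x ⊤ Submodule.mem_top)

/-- If `Ext^i(L, C ⊗ k)` is nonzero for some `i ≤ s`, then for every nonzero finitely generated
`R`-module `N` of dimension at most `d` some `Ext^i(L, C ⊗ N)` with `i ≤ d + s` is nonzero. -/
theorem exists_not_extVanishes_baseChange (L : Type u) [AddCommGroup L] [Module C L]
    (hL : ∀ r ∈ maximalIdeal R, algebraMap R C r ∈ Module.annihilator C L) {s : ℕ}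
    (hs : ∃ i ≤ s, ¬ ExtVanishes C L i (C ⊗[R] (R ⧸ maximalIdeal R))) (d : ℕ)
    (N : Type u) [AddCommGroup N] [Module R N] [Module.Finite R N] [Nontrivial N]
    (hd : Module.supportDim R N ≤ d) :
    ∃ i ≤ d + s, ¬ ExtVanishes C L i (C ⊗[R] N) := by
  induction d using Nat.strong_induction_on generalizing N with | _ d ih => ?_
  by_cases hreg : ∃ x ∈ maximalIdeal R, IsSMulRegular N x
  · obtain ⟨x, hx, hreg⟩ := hreg
    have := nontrivial_quotSMulTop_of_mem_maximalIdeal N hx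
    have hdim := Module.supportDim_quotSMulTop_succ_eq_supportDim hreg hx
    obtain ⟨n, hn⟩ : ∃ n : ℕ∞, (n : WithBot ℕ∞) = Module.supportDim R (QuotSMulTop x N) :=
      WithBot.ne_bot_iff_exists.mp (Module.supportDim_ne_bot_of_nontrivial R _)
    rw [← hdim, ← hn] at hd
    norm_cast at hd
    obtain - | d := d
    · simp at hd
    have hle : n ≤ d := (ENat.add_le_add_iff_right ENat.one_ne_top).mp (by exact_mod_cast hd)
    obtain ⟨i, hi, hE⟩ := ih d (Nat.lt_succ_self d) (QuotSMulTop x N)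
      (by rw [← hn]; exact_mod_cast hle)
    by_contra! hall
    refine hE (.right L (f := (LinearMap.lsmul R N x).baseChange C)
      (g := (Submodule.mkQ _).baseChange C) (baseChange_injective hreg)
      (baseChange_surjective (Submodule.mkQ_surjective _))
      (baseChange_exact (LinearMap.exact_lsmul_mkQ_smul_top N x)) (hall i (by omega))
      (hall (i + 1) (by omega)))
  · push Not at hreg
    obtain ⟨p, hp, hle⟩ := exists_associatedPrime_ge_of_forall_not_isSMulRegular hreg
    obtain rfl : p = maximalIdeal R := (le_maximalIdeal hp.1.ne_top).antisymm hle
    obtain ⟨-, f, hf⟩ := (isAssociatedPrime_iff_exists_injective_linearMap _ _).mp hp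
    obtain ⟨t, ht, hE, hmin⟩ : ∃ t ≤ s, ¬ ExtVanishes C L t (C ⊗[R] (R ⧸ maximalIdeal R)) ∧
        ∀ i < t, ExtVanishes C L i (C ⊗[R] (R ⧸ maximalIdeal R)) := by
      classical
      obtain ⟨i, hi, hE⟩ := hs
      have hex : ∃ i, ¬ ExtVanishes C L i (C ⊗[R] (R ⧸ maximalIdeal R)) := ⟨i, hE⟩
      exact ⟨Nat.find hex, (Nat.find_min' hex hE).trans hi, Nat.find_spec hex,
        fun j hj ↦ not_not.mp (Nat.find_min hex hj)⟩
    refine ⟨t, by omega, fun h ↦ hE ?_⟩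
    obtain - | t := t
    · exact .of_injective_zero L (baseChange_injective hf) h
    · exact .left L (baseChange_injective hf)
        (baseChange_surjective (Submodule.mkQ_surjective (LinearMap.range f)))
        (baseChange_exact (LinearMap.exact_map_mkQ_range f))
        (ExtVanishes.baseChange_of_residueField L hL hmin _ t (Nat.lt_succ_self t)) h

end FlatLocal

section Fiber

open IsLocalRing RingTheory.Sequence

theorem localDepth_eq_idealDepth_of_surjective {C K : Type u} [CommRing C] [CommRing K]
    [IsLocalRing C] [IsLocalRing K] [Algebra C K]
    (h : Function.Surjective (algebraMap C K)) :
    localDepth K K = idealDepth C (maximalIdeal C) K := by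
  have hloc : IsLocalHom (algebraMap C K) := h.isLocalHom
  have : Module.Finite C K := .of_surjective (Algebra.linearMap C K) h
  apply le_antisymm
  · refine sSup_le_sSup ?_
    rintro _ ⟨rs, rfl, hmem, hrs⟩
    obtain ⟨rs, rfl⟩ := List.map_surjective_iff.mpr h rs
    rw [List.forall_mem_map] at hmem
    have hmem' : ∀ r ∈ rs, r ∈ maximalIdeal C := fun r hr hu ↦ hmem r hr (hu.map _)
    exact ⟨rs, by simp, hmem', .of_isWeaklyRegular_of_mem_maximalIdeal K hmem'
      ((isWeaklyRegular_map_algebraMap_iff K K rs).mp hrs.1)⟩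
  · refine sSup_le_sSup ?_
    rintro _ ⟨rs, rfl, hmem, hrs⟩
    refine ⟨rs.map (algebraMap C K), by simp, ?_⟩
    have hmem' : ∀ r ∈ rs.map (algebraMap C K), r ∈ maximalIdeal K :=
      List.forall_mem_map.mpr fun r hr hu ↦ hmem r hr (hloc.map_nonunit r hu)
    exact ⟨hmem', .of_isWeaklyRegular_of_mem_maximalIdeal K hmem'
      ((isWeaklyRegular_map_algebraMap_iff K K rs).mpr hrs.1)⟩

theorem localDepth_le_ringKrullDim {R : Type u} [CommRing R] [IsNoetherianRing R]
    [IsLocalRing R] : (localDepth R R : WithBot ℕ∞) ≤ ringKrullDim R := by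
  rw [← maximalIdeal_height_eq_ringKrullDim, WithBot.coe_le_coe]
  refine sSup_le ?_
  rintro _ ⟨rs, rfl, -, hrs⟩
  rw [← WithBot.coe_le_coe, maximalIdeal_height_eq_ringKrullDim,
    ← ringKrullDim_add_length_eq_ringKrullDim_of_isRegular rs hrs]
  have : Nontrivial (R ⧸ Ideal.ofList rs) :=
    Ideal.Quotient.nontrivial_iff.mpr fun h ↦ hrs.2 (by simp [h])
  exact le_add_of_nonneg_left ringKrullDim_nonneg_of_nontrivial

/-- For a flat local homomorphism `R → C` of noetherian local rings with closed fiber `K`, if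
`dim C ≤ depth C + 1` then `dim K ≤ depth K + 1`. -/
theorem ringKrullDim_fiber_le_localDepth_add_one {R C K : Type u} [CommRing R] [CommRing C]
    [CommRing K] [IsNoetherianRing R] [IsNoetherianRing C] [IsLocalRing R] [IsLocalRing C]
    [IsLocalRing K] [Algebra R C] [Module.Flat R C] [IsLocalHom (algebraMap R C)] [Algebra C K]
    (hsurj : Function.Surjective (algebraMap C K))
    (hker : RingHom.ker (algebraMap C K) = (maximalIdeal R).map (algebraMap R C))
    (hC : ringKrullDim C ≤ localDepth C C + 1) : ringKrullDim K ≤ localDepth K K + 1 := by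
  have : Module.Finite C K := .of_surjective (Algebra.linearMap C K) hsurj
  let eK : (C ⧸ (maximalIdeal R).map (algebraMap R C)) ≃ₐ[C] K :=
    (Ideal.quotientEquivAlgOfEq C hker.symm).trans
      (Ideal.quotientKerAlgEquivOfSurjective (f := Algebra.ofId C K) hsurj)
  let e : (C ⊗[R] (R ⧸ maximalIdeal R)) ≃ₗ[C] K :=
    (Algebra.TensorProduct.quotIdealMapEquivTensorQuot C (maximalIdeal R)).symm.toLinearEquiv ≪≫ₗ
      eK.toLinearEquiv
  have hL : ∀ r ∈ maximalIdeal R,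
      algebraMap R C r ∈ Module.annihilator C (C ⧸ maximalIdeal C) := fun r hr ↦ by
    rw [Ideal.annihilator_quotient]
    exact map_nonunit (algebraMap R C) r hr
  have hdim : ringKrullDim C = ringKrullDim R + ringKrullDim K := by
    have : (maximalIdeal C).LiesOver (maximalIdeal R) :=
      ⟨(maximalIdeal_comap (algebraMap R C)).symm⟩
    have : IsLocalRing (C ⧸ (maximalIdeal R).map (algebraMap R C)) :=
      eK.symm.toRingEquiv.isLocalRing
    have : IsLocalHom (Ideal.Quotient.mk ((maximalIdeal R).map (algebraMap R C))) :=
      Ideal.Quotient.mk_surjective.isLocalHom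
    rw [← ringKrullDim_eq_of_ringEquiv eK.toRingEquiv, ← maximalIdeal_height_eq_ringKrullDim,
      ← maximalIdeal_height_eq_ringKrullDim, ← maximalIdeal_height_eq_ringKrullDim,
      Ideal.height_eq_height_add_of_liesOver_of_hasGoingDown (maximalIdeal R) (maximalIdeal C),
      ← maximalIdeal_comap (Ideal.Quotient.mk ((maximalIdeal R).map (algebraMap R C))),
      Ideal.map_comap_of_surjective _ Ideal.Quotient.mk_surjective, WithBot.coe_add]
  obtain ⟨d, hd⟩ : ∃ d : ℕ, ((d : ℕ∞) : WithBot ℕ∞) = ringKrullDim R := by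
    obtain ⟨d, hd⟩ := ENat.ne_top_iff_exists.mp (maximalIdeal R).height_ne_top_of_isPrime
    exact ⟨d, by rw [hd, maximalIdeal_height_eq_ringKrullDim]⟩
  obtain hK | ⟨s, hs⟩ := (eq_or_ne (localDepth K K) ⊤).imp_right ENat.ne_top_iff_exists.mp
  · rw [← maximalIdeal_height_eq_ringKrullDim, hK]
    exact WithBot.coe_le_coe.mpr (by simp)
  have hle : localDepth C C ≤ (d + s : ℕ) := by
    by_contra! hlt
    have hlt := Order.add_one_le_of_lt hlt
    rw [← Nat.cast_succ, localDepth, natCast_le_idealDepth_iff_extVanishes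
      maximalIdeal_smul_top_lt_top] at hlt
    have hnot : ¬ ((s + 1 : ℕ) : ℕ∞) ≤ localDepth K K := by
      rw [← hs]
      norm_cast
      omega
    rw [localDepth_eq_idealDepth_of_surjective hsurj, natCast_le_idealDepth_iff_extVanishes
      maximalIdeal_smul_top_lt_top] at hnot
    simp only [not_forall] at hnot
    obtain ⟨i, hi, hE⟩ := hnot
    obtain ⟨j, hj, hE⟩ := exists_not_extVanishes_baseChange (C ⧸ maximalIdeal C) hL (s := s)
      ⟨i, by omega, fun h ↦ hE (.of_equiv _ e h)⟩ d R
      (by rw [Module.supportDim_self_eq_ringKrullDim, ← hd]; rfl)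
    exact hE (.of_equiv _ (TensorProduct.AlgebraTensorModule.rid R C C).symm (hlt j (by omega)))
  obtain ⟨k, hk⟩ : ∃ k : ℕ∞, (k : WithBot ℕ∞) = ringKrullDim K :=
    ⟨_, maximalIdeal_height_eq_ringKrullDim⟩
  rw [hdim, ← hd, ← hk] at hC
  rw [← hk, ← hs]
  have hC' : (d : ℕ∞) + k ≤ localDepth C C + 1 := by exact_mod_cast hC
  have := hC'.trans (add_le_add_left hle 1)
  rw [Nat.cast_add, add_assoc, ENat.add_le_add_iff_left (ENat.natCast_ne_top d)] at this
  exact_mod_cast this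

end Fiber

section AlmostCohenMacaulay

open IsLocalRing RingTheory.Sequence

variable {R : Type u} [CommRing R]

theorem depthAt_self (P : PrimeSpectrum R) :
    depthAt R R P =
      localDepth (Localization.AtPrime P.asIdeal) (Localization.AtPrime P.asIdeal) :=
  idealDepth_congr <| LinearEquiv.extendScalarsOfIsLocalization P.asIdeal.primeCompl
    (Localization.AtPrime P.asIdeal) <|
      IsLocalizedModule.iso P.asIdeal.primeCompl
        (Algebra.linearMap R (Localization.AtPrime P.asIdeal))

theorem isAlmostCMRing_iff : IsAlmostCMRing R ↔ ∀ (P : Ideal R) [P.IsPrime],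
    idealDepth R P R = localDepth (Localization.AtPrime P) (Localization.AtPrime P) := by
  have hsupp : Module.support R R = Set.univ := by
    ext P
    simp [Module.support_of_algebra, Algebra.algebraMap_self, RingHom.ker_eq_comap_bot]
  simp only [IsAlmostCMRing, IsAlmostCMModule, hsupp, Set.mem_univ, forall_true_left, depthAt_self]
  exact ⟨fun h P hP ↦ h ⟨P, hP⟩, fun h P ↦ h P.asIdeal⟩

theorem idealDepth_le_localDepth (P : Ideal R) [P.IsPrime] :
    idealDepth R P R ≤ localDepth (Localization.AtPrime P) (Localization.AtPrime P) := by
  refine sSup_le_sSup ?_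
  rintro _ ⟨rs, rfl, hmem, hrs⟩
  refine ⟨rs.map (algebraMap R (Localization.AtPrime P)), by simp, ?_,
    hrs.1.isRegular_of_isLocalization_of_mem _ P hmem⟩
  rw [List.forall_mem_map]
  exact fun r hr ↦ (IsLocalization.AtPrime.to_map_mem_maximal_iff _ P r).mpr (hmem r hr)

variable [IsNoetherianRing R]

theorem maximalIdeal_mem_associatedPrimes_quotient_iff (P : Ideal R) [P.IsPrime] (rs : List R) :
    maximalIdeal (Localization.AtPrime P) ∈ associatedPrimes (Localization.AtPrime P)
      (Localization.AtPrime P ⧸ (Ideal.ofList (rs.map (algebraMap R (Localization.AtPrime P))) • ⊤ :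
        Submodule (Localization.AtPrime P) (Localization.AtPrime P))) ↔
    P ∈ associatedPrimes R (R ⧸ (Ideal.ofList rs • ⊤ : Submodule R R)) := by
  have h : (Ideal.ofList rs • ⊤ : Submodule R R).localized' (Localization.AtPrime P) P.primeCompl
      (Algebra.linearMap R (Localization.AtPrime P)) =
      Ideal.ofList (rs.map (algebraMap R (Localization.AtPrime P))) • ⊤ := by
    rw [Submodule.localized'_smul, Ideal.localized'_eq_map, Submodule.localized'_top,
      Ideal.map_ofList]
  open Module.associatedPrimes in
  rw [← h, ← preimage_comap_associatedPrimes_eq_associatedPrimes_of_isLocalizedModule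
    P.primeCompl (Localization.AtPrime P) (Submodule.toLocalizedQuotient' (Localization.AtPrime P)
      P.primeCompl (Algebra.linearMap R (Localization.AtPrime P)) (Ideal.ofList rs • ⊤)),
    Set.mem_preimage]
  exact iff_of_eq (congrArg (· ∈ _) Localization.AtPrime.under_maximalIdeal)

theorem exists_isPrime_lt_notMem_of_one_lt_height {Q : Ideal R} [Q.IsPrime] (hQ : 1 < Q.height)
    {S : Set (Ideal R)} (hS : S.Finite) (hprime : ∀ p ∈ S, p.IsPrime) :
    ∃ P : Ideal R, P.IsPrime ∧ P < Q ∧ P ∉ S := by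
  have hT : {p ∈ S | ¬ Q ≤ p}.Finite := hS.subset (Set.sep_subset _ _)
  obtain ⟨y, hyQ, hy⟩ : ∃ y ∈ Q, ∀ p ∈ S, ¬ Q ≤ p → y ∉ p := by
    by_contra! h
    obtain ⟨p, hp, hle⟩ := (Q.subset_union_prime_finite hT (f := id) ⊥ ⊥
      fun p hp _ _ ↦ hprime p hp.1).1 fun y hy ↦ by
        obtain ⟨p, hpS, hp, hyp⟩ := h y hy
        exact Set.mem_biUnion ⟨hpS, hp⟩ hyp
    exact hp.2 hle
  obtain ⟨P, hP, hPQ⟩ := Ideal.exists_minimalPrimes_le ((Ideal.span_singleton_le_iff_mem Q).mpr hyQ)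
  have hlt : P < Q := by
    refine lt_of_le_of_ne hPQ ?_
    rintro rfl
    exact hQ.not_ge (Ideal.height_le_one_of_isPrincipal_of_mem_minimalPrimes _ _ hP)
  exact ⟨P, hP.isPrime, hlt, fun hPS ↦ hy P hPS hlt.not_ge
    (hP.le (Ideal.mem_span_singleton_self y))⟩

theorem localDepth_le_height (P : Ideal R) [P.IsPrime] :
    localDepth (Localization.AtPrime P) (Localization.AtPrime P) ≤ P.height := by
  rw [← WithBot.coe_le_coe, ← IsLocalization.AtPrime.ringKrullDim_eq_height P
    (Localization.AtPrime P)]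
  exact localDepth_le_ringKrullDim

theorem IsAlmostCMRing.height_le_localDepth_add_one (hR : IsAlmostCMRing R) (Q : Ideal R)
    [Q.IsPrime] :
    Q.height ≤ localDepth (Localization.AtPrime Q) (Localization.AtPrime Q) + 1 := by
  have : Nontrivial R := ⟨⟨0, 1, fun h ↦ ‹Q.IsPrime›.one_notMem (h ▸ Q.zero_mem)⟩⟩
  rw [isAlmostCMRing_iff] at hR
  obtain ⟨t, ht⟩ := ENat.ne_top_iff_exists.mp
    ((localDepth_le_height Q).trans_lt Q.height_lt_top_of_isPrime).ne
  obtain ⟨rs, rfl, hmem, hrs⟩ := natCast_le_idealDepth_iff.mp ((ht.trans (hR Q).symm).le)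
  by_contra! hlt
  have hle : Ideal.ofList rs ≤ Q := Ideal.span_le.mpr hmem
  let f := Ideal.Quotient.mk (Ideal.ofList rs)
  have hf : Function.Surjective f := Ideal.Quotient.mk_surjective
  have hQ : (Q.map f).IsPrime := Ideal.map_isPrime_of_surjective hf (by simpa [f] using hle)
  have hht : 1 < (Q.map f).height := by
    have h1 : Q.height ≤ (Q.map f).height + rs.length := by
      classical
      refine (Ideal.height_le_height_add_encard_of_subset {r | r ∈ rs} hmem).trans ?_
      gcongr
      rw [← List.coe_toFinset, Set.encard_coe_eq_coe_finsetCard]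
      exact_mod_cast rs.toFinset_card_le
    rw [← ht, add_comm] at hlt
    exact lt_of_add_lt_add_right (hlt.trans_le h1)
  obtain ⟨P, hP, hPQ, hPS⟩ := exists_isPrime_lt_notMem_of_one_lt_height hht
    (S := Ideal.comap f ⁻¹' associatedPrimes R (R ⧸ (Ideal.ofList rs • ⊤ : Submodule R R)))
    ((associatedPrimes.finite R _).preimage (Ideal.comap_injective_of_surjective f hf).injOn)
    fun p hp ↦ by
      have := hp.isPrime
      rw [← Ideal.map_comap_of_surjective f hf p]
      exact Ideal.map_isPrime_of_surjective hf (Ideal.ker_le_comap f)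
  have hPQ' : P.comap f ≤ Q := by
    refine (Ideal.comap_mono hPQ.le).trans ?_
    rw [Ideal.comap_map_of_surjective f hf]
    simpa [f, ← RingHom.ker_eq_comap_bot] using hle
  have hmemP : ∀ r ∈ rs, r ∈ P.comap f := fun r hr ↦ by
    have : f r = 0 := Ideal.Quotient.eq_zero_iff_mem.mpr (Ideal.subset_span hr)
    simp [this]
  obtain ⟨z, hz, hreg⟩ : ∃ z ∈ maximalIdeal (Localization.AtPrime (P.comap f)),
      IsSMulRegular (Localization.AtPrime (P.comap f) ⧸
        (Ideal.ofList (rs.map (algebraMap R (Localization.AtPrime (P.comap f)))) • ⊤ :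
          Submodule (Localization.AtPrime (P.comap f)) (Localization.AtPrime (P.comap f)))) z := by
    by_contra! h
    obtain ⟨p, hp, hle⟩ := exists_associatedPrime_ge_of_forall_not_isSMulRegular h
    rw [← (maximalIdeal.isMaximal _).eq_of_le hp.isPrime.ne_top hle,
      maximalIdeal_mem_associatedPrimes_quotient_iff] at hp
    exact hPS hp
  have hmem' : ∀ r ∈ rs.map (algebraMap R (Localization.AtPrime (P.comap f))) ++ [z],
      r ∈ maximalIdeal (Localization.AtPrime (P.comap f)) := by
    simp only [List.mem_append, List.mem_singleton, or_imp, forall_and, forall_eq, hz, and_true]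
    rw [List.forall_mem_map]
    exact fun r hr ↦ (IsLocalization.AtPrime.to_map_mem_maximal_iff _ (P.comap f) r).mpr
      (hmemP r hr)
  have hreg' : IsRegular (Localization.AtPrime (P.comap f))
      (rs.map (algebraMap R (Localization.AtPrime (P.comap f))) ++ [z]) :=
    .of_isWeaklyRegular_of_mem_maximalIdeal _ hmem' <| (isWeaklyRegular_append_iff _ _ _).mpr
      ⟨hrs.1.of_isLocalization _ (P.comap f).primeCompl,
        (isWeaklyRegular_singleton_iff _ _).mpr hreg⟩
  have hlong : ((rs.length + 1 : ℕ) : ℕ∞) ≤ localDepth (Localization.AtPrime (P.comap f))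
      (Localization.AtPrime (P.comap f)) :=
    natCast_le_idealDepth_iff.mpr ⟨_, by simp, hmem', hreg'⟩
  rw [← hR] at hlong
  have := hlong.trans ((idealDepth_mono hPQ').trans_eq ((hR Q).trans ht.symm))
  norm_cast at this
  omega

theorem isAlmostCMRing_of_forall_height_le (h : ∀ (Q : Ideal R) [Q.IsPrime],
    Q.height ≤ localDepth (Localization.AtPrime Q) (Localization.AtPrime Q) + 1) :
    IsAlmostCMRing R := by
  rw [isAlmostCMRing_iff]
  refine fun P hP ↦ (idealDepth_le_localDepth P).antisymm ?_
  have : Nontrivial R := ⟨⟨0, 1, fun h ↦ hP.one_notMem (h ▸ P.zero_mem)⟩⟩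
  obtain ⟨t, ht⟩ := ENat.ne_top_iff_exists.mp (((idealDepth_le_localDepth P).trans
    (localDepth_le_height P)).trans_lt P.height_lt_top_of_isPrime).ne
  obtain ⟨rs, rfl, hmem, hrs⟩ := natCast_le_idealDepth_iff.mp ht.le
  rw [← ht]
  have hnot : ∀ x ∈ P, ¬ IsSMulRegular (R ⧸ (Ideal.ofList rs • ⊤ : Submodule R R)) x := by
    intro x hx hreg
    have hmem' : ∀ r ∈ rs ++ [x], r ∈ P := by
      simpa [or_imp, forall_and, hx] using hmem
    have hreg' : IsRegular R (rs ++ [x]) := by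
      refine ⟨(isWeaklyRegular_append_iff _ _ _).mpr
        ⟨hrs.1, (isWeaklyRegular_singleton_iff _ _).mpr hreg⟩, fun htop ↦ hP.ne_top ?_⟩
      rw [smul_eq_mul, Ideal.mul_top] at htop
      exact top_le_iff.mp (htop.le.trans (Ideal.span_le.mpr hmem'))
    have := (natCast_le_idealDepth_iff (I := P) (n := rs.length + 1)).mpr
      ⟨_, by simp, hmem', hreg'⟩
    rw [← ht] at this
    norm_cast at this
    omega
  obtain ⟨Q, hQ, hPQ⟩ := exists_associatedPrime_ge_of_forall_not_isSMulRegular hnot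
  have hQp : Q.IsPrime := hQ.isPrime
  have hdepth : localDepth (Localization.AtPrime Q) (Localization.AtPrime Q) ≤ rs.length := by
    have := idealDepth_le_length (rs := rs.map (algebraMap R (Localization.AtPrime Q)))
      maximalIdeal_smul_top_lt_top (hrs.1.of_isLocalization (Localization.AtPrime Q) Q.primeCompl)
      (List.forall_mem_map.mpr fun r hr ↦
        (IsLocalization.AtPrime.to_map_mem_maximal_iff _ Q r).mpr (hPQ (hmem r hr)))
      fun x hx ↦ not_isSMulRegular_of_mem_associatedPrimes
        ((maximalIdeal_mem_associatedPrimes_quotient_iff Q rs).mpr hQ) hx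
    simpa [localDepth] using this
  obtain rfl | hlt := hPQ.eq_or_lt
  · exact hdepth
  · have h1 := (Ideal.height_add_one_le_of_lt_of_isPrime hlt).trans
      ((h Q).trans (add_le_add_left hdepth 1))
    exact (localDepth_le_height P).trans ((ENat.add_le_add_iff_right ENat.one_ne_top).mp h1)

end AlmostCohenMacaulay

section FiberRing

open IsLocalRing

variable {A B : Type u} [CommRing A] [CommRing B] [Algebra A B]

/-- The canonical map from `B` to the fiber ring `B_P / P B_P`. -/
def toFiberRing (P : PrimeSpectrum A) : B →+* fiberRing A B P :=
  (Ideal.Quotient.mk (fiberIdeal A B P)).comp (algebraMap B (Localization (fiberSubmonoid A B P)))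

instance [IsNoetherianRing B] (P : PrimeSpectrum A) : IsNoetherianRing (fiberRing A B P) :=
  have := IsLocalization.isNoetherianRing (fiberSubmonoid A B P)
    (Localization (fiberSubmonoid A B P)) ‹_›
  inferInstanceAs (IsNoetherianRing (Localization (fiberSubmonoid A B P) ⧸ fiberIdeal A B P))

theorem toFiberRing_surjectiveOnStalks (P : PrimeSpectrum A) :
    (toFiberRing (B := B) P).SurjectiveOnStalks :=
  (RingHom.surjectiveOnStalks_of_surjective Ideal.Quotient.mk_surjective).comp
    (RingHom.surjectiveOnStalks_of_isLocalization (fiberSubmonoid A B P) _)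

theorem toFiberRing_eq_zero_iff (P : PrimeSpectrum A) (b : B) :
    toFiberRing P b = 0 ↔
      ∃ u ∈ fiberSubmonoid A B P, u * b ∈ P.asIdeal.map (algebraMap A B) := by
  refine Ideal.Quotient.eq_zero_iff_mem.trans ?_
  rw [fiberIdeal, ← Ideal.map_map, IsLocalization.algebraMap_mem_map_algebraMap_iff
    (fiberSubmonoid A B P)]

theorem isUnit_toFiberRing (P : PrimeSpectrum A) {u : B} (hu : u ∈ fiberSubmonoid A B P) :
    IsUnit (toFiberRing P u) :=
  (IsLocalization.map_units (Localization (fiberSubmonoid A B P)) ⟨u, hu⟩).map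
    (Ideal.Quotient.mk (fiberIdeal A B P))

theorem exists_toFiberRing_mul_eq (P : PrimeSpectrum A) (x : fiberRing A B P) :
    ∃ u ∈ fiberSubmonoid A B P, ∃ b : B, x * toFiberRing P u = toFiberRing P b := by
  obtain ⟨x, rfl⟩ := Ideal.Quotient.mk_surjective x
  obtain ⟨⟨b, u⟩, h⟩ := IsLocalization.surj (fiberSubmonoid A B P) x
  exact ⟨u, u.2, b, congrArg (Ideal.Quotient.mk (fiberIdeal A B P)) h⟩

theorem comap_comap_toFiberRing (P : PrimeSpectrum A) (q : Ideal (fiberRing A B P)) [q.IsPrime] :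
    P.asIdeal = (q.comap (toFiberRing P)).comap (algebraMap A B) := by
  refine le_antisymm (fun a ha ↦ ?_) fun a ha ↦ ?_
  · have : toFiberRing P (algebraMap A B a) = 0 := (toFiberRing_eq_zero_iff P _).mpr
      ⟨1, one_mem _, by simpa using Ideal.mem_map_of_mem _ ha⟩
    simp [this]
  · by_contra haP
    exact ‹q.IsPrime›.ne_top (Ideal.eq_top_of_isUnit_mem _ ha
      (isUnit_toFiberRing P ⟨a, haP, rfl⟩))

theorem ker_localRingHom_toFiberRing (P : PrimeSpectrum A) (q : Ideal (fiberRing A B P))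
    [q.IsPrime] :
    RingHom.ker (Localization.localRingHom (q.comap (toFiberRing P)) q (toFiberRing P) rfl) =
      (maximalIdeal (Localization.AtPrime P.asIdeal)).map
        (Localization.localRingHom P.asIdeal (q.comap (toFiberRing P)) (algebraMap A B)
          (comap_comap_toFiberRing P q)) := by
  have hcomp : (Localization.localRingHom P.asIdeal (q.comap (toFiberRing P)) (algebraMap A B)
      (comap_comap_toFiberRing P q)).comp (algebraMap A (Localization.AtPrime P.asIdeal)) =
      (algebraMap B (Localization.AtPrime (q.comap (toFiberRing P)))).comp (algebraMap A B) :=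
    RingHom.ext fun a ↦ Localization.localRingHom_to_map _ _ _ (comap_comap_toFiberRing P q) a
  rw [← Localization.AtPrime.map_eq_maximalIdeal, Ideal.map_map, hcomp, ← Ideal.map_map]
  ext x
  obtain ⟨b, w, rfl⟩ := IsLocalization.exists_mk'_eq (q.comap (toFiberRing P)).primeCompl x
  rw [RingHom.mem_ker, Localization.localRingHom_mk', IsLocalization.mk'_eq_zero_iff,
    IsLocalization.mk'_mem_map_algebraMap_iff]
  constructor
  · rintro ⟨c, hc⟩
    obtain ⟨u, hu, d, hd⟩ := exists_toFiberRing_mul_eq P (c : fiberRing A B P)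
    have hu' : toFiberRing P u ∉ q := fun h ↦
      ‹q.IsPrime›.ne_top (Ideal.eq_top_of_isUnit_mem _ h (isUnit_toFiberRing P hu))
    have hdq : toFiberRing P d ∉ q := hd ▸ ‹q.IsPrime›.mul_notMem c.2 hu'
    have hdb : toFiberRing P (d * b) = 0 := by
      rw [map_mul, ← hd, mul_right_comm, hc, zero_mul]
    obtain ⟨v, hv, hvdb⟩ := (toFiberRing_eq_zero_iff P _).mp hdb
    have hv' : toFiberRing P v ∉ q := fun h ↦
      ‹q.IsPrime›.ne_top (Ideal.eq_top_of_isUnit_mem _ h (isUnit_toFiberRing P hv))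
    refine ⟨v * d, fun h ↦ ‹q.IsPrime›.mul_notMem hv' hdq ?_, by rwa [mul_assoc]⟩
    simpa using h
  · rintro ⟨s, hs, hsb⟩
    refine ⟨⟨toFiberRing P s, hs⟩, ?_⟩
    rw [← map_mul]
    exact (toFiberRing_eq_zero_iff P _).mpr ⟨1, one_mem _, by rwa [one_mul]⟩

end FiberRing

theorem fibers_of_flat_almostCM (A B : Type u) [CommRing A] [CommRing B]
    [IsNoetherianRing A] [IsNoetherianRing B] [Algebra A B] [Module.Flat A B]
    (hB : IsAlmostCMRing B) (P : PrimeSpectrum A) :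
    IsAlmostCMRing (fiberRing A B P) := by
  refine isAlmostCMRing_of_forall_height_le fun q _ ↦ ?_
  let Q := q.comap (toFiberRing (B := B) P)
  let f : Localization.AtPrime P.asIdeal →+* Localization.AtPrime Q :=
    Localization.localRingHom P.asIdeal Q (algebraMap A B) (comap_comap_toFiberRing P q)
  let g : Localization.AtPrime Q →+* Localization.AtPrime q :=
    Localization.localRingHom Q q (toFiberRing P) rfl
  have hf : f.Flat := RingHom.Flat.localRingHom (RingHom.flat_algebraMap_iff.mpr ‹_›) _ _ _
  have hfl : IsLocalHom f := Localization.isLocalHom_localRingHom _ _ _ _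
  algebraize [f, g]
  have := ringKrullDim_fiber_le_localDepth_add_one (R := Localization.AtPrime P.asIdeal)
    (C := Localization.AtPrime Q) (K := Localization.AtPrime q)
    (toFiberRing_surjectiveOnStalks P q ‹_›) (ker_localRingHom_toFiberRing P q)
    (by
      rw [IsLocalization.AtPrime.ringKrullDim_eq_height Q]
      exact_mod_cast hB.height_le_localDepth_add_one Q)
  rw [IsLocalization.AtPrime.ringKrullDim_eq_height q] at this
  exact_mod_cast this

end
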